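/- On a pseudo-Riemannian manifold of dimension n = 2k, the divergence of the tensor Ω^{(k)} (defined as in Theorem 'pfaffian') satisfies ∇^j Ω^{(k)}_{ij} = (2k/k!) δ^{j j₂…j_{2k}}_{i i₂…i_{2k}} C_{j j₂}{}^{i₂} W_{j₃j₄}{}^{i₃i₄} ⋯ W_{j_{2k−1}j_{2k}}{}^{i_{2k−1}i_{2k}}. Consequently 2k ξ^{(k)}_i = ∇^j (tf Ω^{(k)})_{ij} + (1/(2k)) ∇_i Pf^{(k)}(Rm), where (tf Ω^{(k)})_{ij} = Ω^{(k)}_{ij} − (1/(2k)) (tr Ω^{(k)}) g_{ij}. -/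

import Mathlib

open scoped BigOperators

noncomputable def kron {n : ℕ} (i j : Fin n) : ℝ := if i = j then 1 else 0

noncomputable def gdelta {n m : ℕ} (j i : Fin m → Fin n) : ℝ :=
  Matrix.det (Matrix.of fun a b => kron (j a) (i b))

def d0 {k : ℕ} (a : Fin k) : Fin (2 * k) := ⟨2 * a.val, by have := a.isLt; omega⟩
def d1 {k : ℕ} (a : Fin k) : Fin (2 * k) := ⟨2 * a.val + 1, by have := a.isLt; omega⟩
def e1 {K : ℕ} (a : Fin K) : Fin (2 * K + 1) := ⟨2 * a.val + 1, by have := a.isLt; omega⟩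
def e2 {K : ℕ} (a : Fin K) : Fin (2 * K + 1) := ⟨2 * a.val + 2, by have := a.isLt; omega⟩

noncomputable def alt3 {n : ℕ} (T : Fin n → Fin n → Fin n → ℝ) (i j k : Fin n) : ℝ :=
  (1 / 6 : ℝ) * ∑ σ : Equiv.Perm (Fin 3),
    ((Equiv.Perm.sign σ : ℤ) : ℝ) * T (![i, j, k] (σ 0)) (![i, j, k] (σ 1)) (![i, j, k] (σ 2))

noncomputable def alt2 {n : ℕ} (T : Fin n → Fin n → ℝ) (l m : Fin n) : ℝ :=
  (1 / 2 : ℝ) * (T l m - T m l)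

/-- `Pf^{(k)}(A)`. -/
noncomputable def PfA {n k : ℕ} (A : Fin n → Fin n → Fin n → Fin n → ℝ) : ℝ :=
  (1 / (Nat.factorial k : ℝ)) *
    ∑ js : Fin (2 * k) → Fin n, ∑ is : Fin (2 * k) → Fin n,
      gdelta js is * ∏ a : Fin k, A (js (d0 a)) (js (d1 a)) (is (d0 a)) (is (d1 a))

/-- `∇_e Pf^{(k)}(A)` by the Leibniz rule, from `DA = ∇A`. -/
noncomputable def DPfA {n k : ℕ} (A : Fin n → Fin n → Fin n → Fin n → ℝ)
    (DA : Fin n → Fin n → Fin n → Fin n → Fin n → ℝ) (e : Fin n) : ℝ :=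
  (1 / (Nat.factorial k : ℝ)) *
    ∑ js : Fin (2 * k) → Fin n, ∑ is : Fin (2 * k) → Fin n,
      gdelta js is * ∑ w : Fin k,
        DA e (js (d0 w)) (js (d1 w)) (is (d0 w)) (is (d1 w)) *
          ∏ b ∈ Finset.univ.erase w, A (js (d0 b)) (js (d1 b)) (is (d0 b)) (is (d1 b))

/-- The tensor `Ω^{(k)}` of Theorem `pfaffian`. -/
noncomputable def OmegaT {n k : ℕ} (W : Fin n → Fin n → Fin n → Fin n → ℝ)
    (P : Fin n → Fin n → ℝ) (i j : Fin n) : ℝ :=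
  ∑ ℓ : Fin k, (4 : ℝ) ^ (k - ℓ.val) * (1 / ((Nat.factorial ℓ.val : ℝ) * ((k : ℝ) - (ℓ.val : ℝ)))) *
    ∑ js : Fin (k + ℓ.val) → Fin n, ∑ is : Fin (k + ℓ.val) → Fin n,
      gdelta (Fin.cons j js) (Fin.cons i is) *
        (∏ a : Fin ℓ.val,
          W (js ⟨2 * a.val, by have := a.isLt; have := ℓ.isLt; omega⟩)
            (js ⟨2 * a.val + 1, by have := a.isLt; have := ℓ.isLt; omega⟩)
            (is ⟨2 * a.val, by have := a.isLt; have := ℓ.isLt; omega⟩)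
            (is ⟨2 * a.val + 1, by have := a.isLt; have := ℓ.isLt; omega⟩)) *
        (∏ b : Fin (k - ℓ.val),
          P (js ⟨2 * ℓ.val + b.val, by have := b.isLt; have := ℓ.isLt; omega⟩)
            (is ⟨2 * ℓ.val + b.val, by have := b.isLt; have := ℓ.isLt; omega⟩))

/-- `∇_e (Ω^{(k)})_i^j` by the Leibniz rule, from `DW = ∇W` and `DP = ∇P`. -/
noncomputable def DOmegaT {n k : ℕ} (W : Fin n → Fin n → Fin n → Fin n → ℝ)
    (P : Fin n → Fin n → ℝ)
    (DW : Fin n → Fin n → Fin n → Fin n → Fin n → ℝ)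
    (DP : Fin n → Fin n → Fin n → ℝ) (e : Fin n) (i j : Fin n) : ℝ :=
  ∑ ℓ : Fin k, (4 : ℝ) ^ (k - ℓ.val) * (1 / ((Nat.factorial ℓ.val : ℝ) * ((k : ℝ) - (ℓ.val : ℝ)))) *
    ∑ js : Fin (k + ℓ.val) → Fin n, ∑ is : Fin (k + ℓ.val) → Fin n,
      gdelta (Fin.cons j js) (Fin.cons i is) *
        ((∑ w : Fin ℓ.val,
          DW e (js ⟨2 * w.val, by have := w.isLt; have := ℓ.isLt; omega⟩)
            (js ⟨2 * w.val + 1, by have := w.isLt; have := ℓ.isLt; omega⟩)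
            (is ⟨2 * w.val, by have := w.isLt; have := ℓ.isLt; omega⟩)
            (is ⟨2 * w.val + 1, by have := w.isLt; have := ℓ.isLt; omega⟩) *
            (∏ a ∈ Finset.univ.erase w,
              W (js ⟨2 * a.val, by have := a.isLt; have := ℓ.isLt; omega⟩)
                (js ⟨2 * a.val + 1, by have := a.isLt; have := ℓ.isLt; omega⟩)
                (is ⟨2 * a.val, by have := a.isLt; have := ℓ.isLt; omega⟩)
                (is ⟨2 * a.val + 1, by have := a.isLt; have := ℓ.isLt; omega⟩)) *
            (∏ b : Fin (k - ℓ.val),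
              P (js ⟨2 * ℓ.val + b.val, by have := b.isLt; have := ℓ.isLt; omega⟩)
                (is ⟨2 * ℓ.val + b.val, by have := b.isLt; have := ℓ.isLt; omega⟩)))
        + (∑ p : Fin (k - ℓ.val),
          DP e (js ⟨2 * ℓ.val + p.val, by have := p.isLt; have := ℓ.isLt; omega⟩)
            (is ⟨2 * ℓ.val + p.val, by have := p.isLt; have := ℓ.isLt; omega⟩) *
            (∏ a : Fin ℓ.val,
              W (js ⟨2 * a.val, by have := a.isLt; have := ℓ.isLt; omega⟩)
                (js ⟨2 * a.val + 1, by have := a.isLt; have := ℓ.isLt; omega⟩)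
                (is ⟨2 * a.val, by have := a.isLt; have := ℓ.isLt; omega⟩)
                (is ⟨2 * a.val + 1, by have := a.isLt; have := ℓ.isLt; omega⟩)) *
            (∏ b ∈ Finset.univ.erase p,
              P (js ⟨2 * ℓ.val + b.val, by have := b.isLt; have := ℓ.isLt; omega⟩)
                (is ⟨2 * ℓ.val + b.val, by have := b.isLt; have := ℓ.isLt; omega⟩))))

/-- The first term of `ξ^{(k)}` (`k = K+1`). -/
noncomputable def xiTerm1 {n K : ℕ} (W : Fin n → Fin n → Fin n → Fin n → ℝ)
    (C : Fin n → Fin n → Fin n → ℝ) (i : Fin n) : ℝ :=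
  (1 / (Nat.factorial (K + 1) : ℝ)) *
    ∑ j : Fin n, ∑ J : Fin (2 * K + 1) → Fin n, ∑ I : Fin (2 * K + 1) → Fin n,
      gdelta (Fin.cons j J) (Fin.cons i I) * C j (J 0) (I 0) *
        ∏ a : Fin K, W (J (e1 a)) (J (e2 a)) (I (e1 a)) (I (e2 a))


section Helpers
open MvPolynomial

noncomputable def gd {n : ℕ} {ι : Type} [Fintype ι] [DecidableEq ι] (j i : ι → Fin n) : ℝ :=
  Matrix.det (Matrix.of fun a b => kron (j a) (i b))

lemma gd_equiv {n : ℕ} {ι ι' : Type} [Fintype ι] [DecidableEq ι] [Fintype ι'] [DecidableEq ι']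
    (e : ι ≃ ι') (j i : ι' → Fin n) : gd (fun a => j (e a)) (fun a => i (e a)) = gd j i :=
  Matrix.det_submatrix_equiv_self e (Matrix.of fun a b => kron (j a) (i b))

lemma exists_fiber_equiv {ι ι' β : Type} [Fintype ι] [Fintype ι'] [DecidableEq β]
    (f : ι → β) (f' : ι' → β)
    (h : (Finset.univ : Finset ι).val.map f = (Finset.univ : Finset ι').val.map f') :
    ∃ e : ι ≃ ι', ∀ a, f' (e a) = f a := by
  have hc : ∀ c, Nonempty ({a // f a = c} ≃ {b // f' b = c}) := by
    intro c
    have h2 := congrArg (Multiset.count c) h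
    rw [Multiset.count_map, Multiset.count_map] at h2
    refine ⟨Fintype.equivOfCardEq ?_⟩
    rw [Fintype.card_subtype, Fintype.card_subtype]
    simp only [Finset.card, Finset.filter_val]
    simpa only [eq_comm] using h2
  let e := fun c => (hc c).some
  exact ⟨Equiv.ofFiberEquiv e, fun a => Equiv.ofFiberEquiv_map e a⟩

abbrev Pol (n : ℕ) := MvPolynomial (Fin n × Fin n) ℝ

open Classical in
noncomputable def LL (n : ℕ) : Pol n →ₗ[ℝ] ℝ :=
  (MvPolynomial.basisMonomials (Fin n × Fin n) ℝ).constr ℝ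
    (fun s => gd (fun t : (Finsupp.toMultiset s).ToType => t.1.1) (fun t => t.1.2))

lemma LL_prod {n : ℕ} {ι : Type} [Fintype ι] [DecidableEq ι] (j i : ι → Fin n) :
    LL n (∏ a, X (j a, i a)) = gd j i := by
  have h1 : (∏ a, X (j a, i a) : Pol n)
      = monomial (∑ a, Finsupp.single (j a, i a) 1) 1 := by
    rw [MvPolynomial.monomial_sum_one]; rfl
  have h2 : (∏ a, X (j a, i a) : Pol n) = MvPolynomial.basisMonomials (Fin n × Fin n) ℝ
      (∑ a, Finsupp.single (j a, i a) 1) := by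
    rw [h1, MvPolynomial.coe_basisMonomials]
  rw [h2, LL, Module.Basis.constr_basis]
  set s : (Fin n × Fin n) →₀ ℕ := ∑ a, Finsupp.single (j a, i a) 1 with hs
  have h3 : Finsupp.toMultiset s = (Finset.univ : Finset ι).val.map (fun a => (j a, i a)) := by
    rw [hs, map_sum]
    simp only [Finsupp.toMultiset_single, one_smul]
    simp only [Finset.sum]
    have := Multiset.sum_map_singleton
      ((Finset.univ : Finset ι).val.map (fun a => (j a, i a)))
    rw [Multiset.map_map] at this
    exact this
  obtain ⟨e, he⟩ := exists_fiber_equiv (fun t : (Finsupp.toMultiset s).ToType => t.1)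
    (fun a => (j a, i a)) ((Multiset.map_univ_coe _).trans h3)
  classical
  rw [← gd_equiv e j i]
  congr 1
  · funext t; exact (congrArg Prod.fst (he t)).symm
  · funext t; exact (congrArg Prod.snd (he t)).symm

lemma monomial_eq_prod {n : ℕ} (s : (Fin n × Fin n) →₀ ℕ) :
    ∃ (j i : Fin s.degree → Fin n), (monomial s 1 : Pol n) = ∏ a, X (j a, i a) := by
  have hl : (Finsupp.toMultiset s).toList.length = s.degree := by
    rw [Multiset.length_toList, Finsupp.card_toMultiset]; rfl
  have key : (monomial s 1 : Pol n)
      = ∏ a, X ((Finsupp.toMultiset s).toList.get (Fin.cast hl.symm a)) := by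
    have h1 : ∀ (l : List (Fin n × Fin n)) (m : ℕ) (h : m = l.length),
        ∏ a : Fin m, (X (l.get (Fin.cast h a)) : Pol n) = (l.map X).prod := by
      intro l m h
      subst h
      simp
    rw [h1, ← Multiset.prod_coe, ← Multiset.map_coe, Multiset.coe_toList,
      Finsupp.toMultiset_map, Finsupp.prod_toMultiset,
      Finsupp.prod_mapDomain_index (by simp) (by intros; rw [pow_add]), MvPolynomial.monomial_eq]
    simp
  exact ⟨_, _, key⟩

/-- to prove a linear identity it suffices to do it on products of variables -/
lemma LL_ext {n : ℕ} (f g : Pol n →ₗ[ℝ] ℝ)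
    (h : ∀ (m : ℕ) (j i : Fin m → Fin n), f (∏ a, X (j a, i a)) = g (∏ a, X (j a, i a))) :
    f = g := by
  apply (MvPolynomial.basisMonomials (Fin n × Fin n) ℝ).ext
  intro s
  rw [MvPolynomial.coe_basisMonomials]
  obtain ⟨j, i, hji⟩ := monomial_eq_prod s
  simp only [hji, h]

lemma LL_swap {n : ℕ} (a b c d : Fin n) (y : Pol n) :
    LL n (X (a, c) * X (b, d) * y) = - LL n (X (b, c) * X (a, d) * y) := by
  have := LL_ext ((LL n).comp (LinearMap.mulLeft ℝ (X (a, c) * X (b, d))))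
    (-(LL n).comp (LinearMap.mulLeft ℝ (X (b, c) * X (a, d)))) ?_
  · exact congrArg (fun f => f y) this
  intro m j i
  simp only [LinearMap.comp_apply, LinearMap.neg_apply, LinearMap.mulLeft_apply]
  have h : ∀ a b, (X (a, c) * X (b, d) * ∏ t, X (j t, i t) : Pol n)
      = ∏ t : Fin (m + 2), X ((Fin.cons a (Fin.cons b j) : Fin (m+2) → Fin n) t,
          (Fin.cons c (Fin.cons d i) : Fin (m+2) → Fin n) t) := by
    intro a b
    rw [Fin.prod_univ_succ, Fin.prod_univ_succ]
    simp [mul_assoc]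
  rw [h, h, LL_prod, LL_prod]
  have := Matrix.det_permute (Equiv.swap (0 : Fin (m+2)) 1)
    (Matrix.of fun x y => kron ((Fin.cons b (Fin.cons a j) : Fin (m+2) → Fin n) x)
      ((Fin.cons c (Fin.cons d i) : Fin (m+2) → Fin n) y))
  rw [Equiv.Perm.sign_swap (by simp)] at this
  unfold gd
  rw [show ((((-1 : ℤˣ)) : ℤ) : ℝ) = -1 by simp, neg_one_mul] at this
  rw [← this]
  congr 1
  ext x y
  simp only [Matrix.submatrix_apply, Matrix.of_apply, id]
  congr 1
  refine Fin.cases ?_ (fun x => ?_) x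
  · simp [Equiv.swap_apply_left]
  · refine Fin.cases ?_ (fun x => ?_) x
    · simp [Equiv.swap_apply_right]
    · rw [Equiv.swap_apply_of_ne_of_ne]
      · simp
      · exact Fin.succ_ne_zero _
      · intro h
        exact Fin.succ_ne_zero x (Fin.succ_injective _ h)

lemma gd_contract {n m : ℕ} (j i : Fin m → Fin n) :
    ∑ a, gd (Fin.cons a j : Fin (m+1) → Fin n) (Fin.cons a i) = ((n : ℝ) - m) * gd j i := by
  have h1 : ∀ a, gd (Fin.cons a j : Fin (m+1) → Fin n) (Fin.cons a i)
      = gd j i + ∑ c : Fin m, (-1 : ℝ) ^ (c.val + 1) * (kron a (i c) *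
        gd j (fun t => (Fin.cons a i : Fin (m+1) → Fin n) (c.succ.succAbove t))) := by
    intro a
    unfold gd
    rw [Matrix.det_succ_row_zero, Fin.sum_univ_succ]
    congr 1
    · simp [kron]
      rfl
    · refine Finset.sum_congr rfl fun c _ => ?_
      simp [mul_assoc]
      left
      rfl
  simp only [h1, Finset.sum_add_distrib]
  rw [Finset.sum_comm]
  have h2 : ∀ c : Fin m, ∑ a, (-1 : ℝ) ^ (c.val + 1) * (kron a (i c) *
        gd j (fun t => (Fin.cons a i : Fin (m+1) → Fin n) (c.succ.succAbove t))) = - gd j i := by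
    intro c
    rw [Finset.sum_eq_single (i c) (by intro b _ hb; simp [kron, hb]) (by simp)]
    have h3 : ∀ t, (Fin.cons (i c) i : Fin (m+1) → Fin n) (c.succ.succAbove t)
        = i (c.cycleRange.symm t) := by
      intro t
      obtain ⟨u, rfl⟩ := c.cycleRange.surjective t
      rw [Fin.succAbove_cycleRange, Equiv.symm_apply_apply]
      by_cases hu : u = c
      · subst hu; simp
      · rw [Equiv.swap_apply_of_ne_of_ne (Fin.succ_ne_zero _)
          (fun h => hu (Fin.succ_injective _ h))]
        simp
    simp only [h3]
    have h4 : gd j (fun t => i (c.cycleRange.symm t)) = (-1 : ℝ) ^ c.val * gd j i := by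
      have := Matrix.det_permute' (c.cycleRange.symm)
        (Matrix.of fun x y => kron (j x) (i y))
      rw [Equiv.Perm.sign_symm, Fin.sign_cycleRange] at this
      unfold gd
      rw [← show ((((-1 : ℤˣ) ^ c.val : ℤˣ) : ℤ) : ℝ) = (-1) ^ c.val by simp, ← this]
      rfl
    rw [h4]
    simp only [kron, if_true, one_mul]
    rw [← mul_assoc, ← pow_add, show c.val + 1 + c.val = 2 * c.val + 1 by ring, pow_succ, pow_mul]
    simp
  simp only [h2]
  simp
  ring

noncomputable def gg (n : ℕ) : Pol n := ∑ a, X (a, a)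

lemma LL_contract {n m : ℕ} (y : Pol n) (hy : y.IsHomogeneous m) :
    LL n (gg n * y) = ((n : ℝ) - m) * LL n y := by
  have hm : ∀ s : (Fin n × Fin n) →₀ ℕ, s.degree = m →
      LL n (gg n * monomial s 1) = ((n : ℝ) - m) * LL n (monomial s 1) := by
    intro s hs
    subst hs
    obtain ⟨j, i, hji⟩ := monomial_eq_prod s
    rw [hji, LL_prod, ← gd_contract, gg, Finset.sum_mul, map_sum]
    refine Finset.sum_congr rfl fun a _ => ?_
    rw [← LL_prod, Fin.prod_univ_succ]
    simp
  rw [y.as_sum, Finset.mul_sum, map_sum, map_sum, Finset.mul_sum]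
  refine Finset.sum_congr rfl fun s hs => ?_
  have h1 : (monomial s (coeff s y) : Pol n) = coeff s y • monomial s 1 := by
    rw [MvPolynomial.smul_monomial]; simp
  rw [h1, mul_smul_comm, map_smul, map_smul, hm s (hy.degree_eq_sum_deg_support hs).symm]
  simp only [smul_eq_mul]; ring

lemma LL_contract_pow {n : ℕ} (s : ℕ) : ∀ (d : ℕ) (y : Pol n), y.IsHomogeneous d → d + s = n →
    LL n (gg n ^ s * y) = (s.factorial : ℝ) * LL n y := by
  induction s with
  | zero => intro d y _ _; simp
  | succ s ih =>
    intro d y hy hd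
    have hg : (gg n).IsHomogeneous 1 :=
      IsHomogeneous.sum _ _ _ fun a _ => isHomogeneous_X _ _
    rw [pow_succ, mul_assoc, ih (1 + d) _ (hg.mul hy) (by omega), LL_contract _ hy,
      Nat.factorial_succ]
    have hn : (n : ℝ) = d + (s + 1) := by rw [← hd]; push_cast; ring
    rw [hn]
    push_cast
    ring

noncomputable def w4 {n : ℕ} (A : Fin n → Fin n → Fin n → Fin n → ℝ) : Pol n :=
  ∑ a, ∑ b, ∑ c, ∑ d, A a b c d • (X (a, c) * X (b, d))

noncomputable def p2 {n : ℕ} (B : Fin n → Fin n → ℝ) : Pol n :=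
  ∑ a, ∑ c, B a c • X (a, c)

def expEquiv (κ μ F : Type) :
    ((κ × Bool) ⊕ μ → F) × ((κ × Bool) ⊕ μ → F) ≃ (κ → F × F × F × F) × (μ → F × F) where
  toFun f := (fun a => (f.1 (Sum.inl (a, false)), f.1 (Sum.inl (a, true)),
      f.2 (Sum.inl (a, false)), f.2 (Sum.inl (a, true))),
    fun b => (f.1 (Sum.inr b), f.2 (Sum.inr b)))
  invFun h := (Sum.elim (fun s => cond s.2 (h.1 s.1).2.1 (h.1 s.1).1) (fun b => (h.2 b).1),
    Sum.elim (fun s => cond s.2 (h.1 s.1).2.2.2 (h.1 s.1).2.2.1) (fun b => (h.2 b).2))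
  left_inv f := by
    ext s
    · rcases s with ⟨a, _ | _⟩ | b <;> rfl
    · rcases s with ⟨a, _ | _⟩ | b <;> rfl
  right_inv h := by
    ext s <;> rfl

lemma prod_expand {n : ℕ} {κ μ : Type} [Fintype κ] [DecidableEq κ] [Fintype μ] [DecidableEq μ]
    (A : κ → Fin n → Fin n → Fin n → Fin n → ℝ) (B : μ → Fin n → Fin n → ℝ) :
    (∏ a, w4 (A a)) * ∏ b, p2 (B b) =
      ∑ js : (κ × Bool) ⊕ μ → Fin n, ∑ is : (κ × Bool) ⊕ μ → Fin n,
        ((∏ a, A a (js (Sum.inl (a, false))) (js (Sum.inl (a, true)))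
            (is (Sum.inl (a, false))) (is (Sum.inl (a, true)))) *
          ∏ b, B b (js (Sum.inr b)) (is (Sum.inr b))) • ∏ s, (X (js s, is s) : Pol n) := by
  have hw : ∀ a, w4 (A a) = ∑ q : Fin n × Fin n × Fin n × Fin n,
      A a q.1 q.2.1 q.2.2.1 q.2.2.2 • (X (q.1, q.2.2.1) * X (q.2.1, q.2.2.2) : Pol n) := by
    intro a
    simp only [w4, Fintype.sum_prod_type]
  have hp : ∀ b, p2 (B b) = ∑ q : Fin n × Fin n, B b q.1 q.2 • (X (q.1, q.2) : Pol n) := by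
    intro b
    simp only [p2, Fintype.sum_prod_type]
  simp only [hw, hp, Finset.prod_univ_sum, Fintype.piFinset_univ]
  rw [Finset.sum_mul_sum, ← Fintype.sum_prod_type', ← Fintype.sum_prod_type']
  symm
  refine Fintype.sum_equiv (expEquiv κ μ (Fin n)) _ _ fun f => ?_
  simp only [Finset.prod_smul, expEquiv, Equiv.coe_fn_mk, Fintype.prod_sum_type,
    Fintype.prod_prod_type, Fintype.prod_bool]
  rw [smul_mul_smul_comm]
  congr 2
  exact Finset.prod_congr rfl fun a _ => mul_comm _ _

lemma sum_expand {n : ℕ} {κ μ ι : Type} [Fintype κ] [DecidableEq κ] [Fintype μ] [DecidableEq μ]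
    [Fintype ι] [DecidableEq ι] (e : (κ × Bool) ⊕ μ ≃ ι) (Z : Pol n)
    (A : κ → Fin n → Fin n → Fin n → Fin n → ℝ) (B : μ → Fin n → Fin n → ℝ) :
    ∑ js : ι → Fin n, ∑ is : ι → Fin n, LL n (Z * ∏ s, X (js s, is s)) *
      ((∏ a, A a (js (e (Sum.inl (a, false)))) (js (e (Sum.inl (a, true))))
            (is (e (Sum.inl (a, false)))) (is (e (Sum.inl (a, true))))) *
          ∏ b, B b (js (e (Sum.inr b))) (is (e (Sum.inr b))))
      = LL n (Z * ((∏ a, w4 (A a)) * ∏ b, p2 (B b))) := by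
  rw [prod_expand, Finset.mul_sum, map_sum]
  refine Fintype.sum_equiv (e.symm.arrowCongr (Equiv.refl _)) _ _ fun js => ?_
  rw [Finset.mul_sum, map_sum]
  refine Fintype.sum_equiv (e.symm.arrowCongr (Equiv.refl _)) _ _ fun is => ?_
  rw [mul_smul_comm, map_smul, smul_eq_mul, mul_comm]
  congr 2
  congr 1
  exact (Fintype.prod_equiv e _ _ fun s => rfl).symm

lemma gdelta_eq {n m : ℕ} (j i : Fin m → Fin n) : gdelta j i = LL n (1 * ∏ a, X (j a, i a)) := by
  rw [one_mul, LL_prod]; rfl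

lemma gdelta_cons_eq {n m : ℕ} (a b : Fin n) (j i : Fin m → Fin n) :
    gdelta (Fin.cons a j : Fin (m+1) → Fin n) (Fin.cons b i)
      = LL n (X (a, b) * ∏ t, X (j t, i t)) := by
  have : (X (a, b) * ∏ t, X (j t, i t) : Pol n)
      = ∏ t : Fin (m + 1), X ((Fin.cons a j : Fin (m+1) → Fin n) t,
          (Fin.cons b i : Fin (m+1) → Fin n) t) := by
    rw [Fin.prod_univ_succ]; simp
  rw [this, LL_prod]; rfl

noncomputable def eqOm (k ℓ : ℕ) (h : ℓ < k) : (Fin ℓ × Bool) ⊕ Fin (k - ℓ) ≃ Fin (k + ℓ) :=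
  Equiv.ofBijective (Sum.elim
      (fun s => ⟨2 * s.1.val + cond s.2 1 0, by
        have := s.1.isLt; rcases s.2 <;> simp <;> omega⟩)
      (fun b => ⟨2 * ℓ + b.val, by have := b.isLt; omega⟩)) (by
    constructor
    · rintro (⟨⟨a, ha⟩, _ | _⟩ | ⟨b, hb⟩) (⟨⟨a', ha'⟩, _ | _⟩ | ⟨b', hb'⟩) <;>
        simp <;> omega
    · rintro ⟨x, hx⟩
      by_cases h1 : x < 2 * ℓ
      · rcases Nat.even_or_odd' x with ⟨c, rfl | rfl⟩
        · exact ⟨Sum.inl (⟨c, by omega⟩, false), by simp⟩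
        · exact ⟨Sum.inl (⟨c, by omega⟩, true), by simp⟩
      · exact ⟨Sum.inr ⟨x - 2 * ℓ, by omega⟩, by simp; omega⟩)

noncomputable def eqPf (k : ℕ) : (Fin k × Bool) ⊕ Empty ≃ Fin (2 * k) :=
  Equiv.ofBijective (Sum.elim (fun s => cond s.2 (d1 s.1) (d0 s.1)) (fun b => b.elim)) (by
    constructor
    · rintro (⟨⟨a, ha⟩, _ | _⟩ | ⟨⟨⟩⟩) (⟨⟨a', ha'⟩, _ | _⟩ | ⟨⟨⟩⟩) <;>
        simp [d0, d1] <;> omega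
    · rintro ⟨x, hx⟩
      rcases Nat.even_or_odd' x with ⟨c, rfl | rfl⟩
      · exact ⟨Sum.inl (⟨c, by omega⟩, false), by simp [d0]⟩
      · exact ⟨Sum.inl (⟨c, by omega⟩, true), by simp [d1]⟩)

noncomputable def eqXi (K : ℕ) : (Fin K × Bool) ⊕ Unit ≃ Fin (2 * K + 1) :=
  Equiv.ofBijective (Sum.elim (fun s => cond s.2 (e2 s.1) (e1 s.1)) (fun _ => 0)) (by
    constructor
    · rintro (⟨⟨a, ha⟩, _ | _⟩ | ⟨⟨⟩⟩) (⟨⟨a', ha'⟩, _ | _⟩ | ⟨⟨⟩⟩) <;>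
        simp [e1, e2, Fin.ext_iff] <;> omega
    · rintro ⟨x, hx⟩
      rcases Nat.even_or_odd' x with ⟨c, rfl | rfl⟩
      · rcases c with _ | c
        · exact ⟨Sum.inr (), by simp⟩
        · exact ⟨Sum.inl (⟨c, by omega⟩, true), by simp [e2]; ring⟩
      · exact ⟨Sum.inl (⟨c, by omega⟩, false), by simp [e1]⟩)

/-- one factor replaced -/
lemma prod_update_erase {κ R : Type} [Fintype κ] [DecidableEq κ] [CommMonoid R] (w : κ) (f : κ → R) (g : R) :
    g * ∏ b ∈ Finset.univ.erase w, f b = ∏ b, (if b = w then g else f b) := by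
  rw [← Finset.mul_prod_erase Finset.univ _ (Finset.mem_univ w)]
  simp only [if_true]
  congr 1
  refine Finset.prod_congr rfl fun b hb => ?_
  rw [if_neg (Finset.ne_of_mem_erase hb)]

lemma DPfA_eq {n k : ℕ} (A : Fin n → Fin n → Fin n → Fin n → ℝ)
    (DA : Fin n → Fin n → Fin n → Fin n → Fin n → ℝ) (e : Fin n) :
    DPfA (k := k) A DA e = (1 / (Nat.factorial k : ℝ)) *
      LL n (k * w4 (DA e) * w4 A ^ (k - 1)) := by
  unfold DPfA
  congr 1
  have h : ∀ w : Fin k, ∑ js : Fin (2 * k) → Fin n, ∑ is : Fin (2 * k) → Fin n,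
      gdelta js is * (DA e (js (d0 w)) (js (d1 w)) (is (d0 w)) (is (d1 w)) *
          ∏ b ∈ Finset.univ.erase w, A (js (d0 b)) (js (d1 b)) (is (d0 b)) (is (d1 b)))
      = LL n (w4 (DA e) * w4 A ^ (k - 1)) := by
    intro w
    have := sum_expand (eqPf k) (1 : Pol n) (fun a => if a = w then DA e else A)
      (fun b : Empty => b.elim)
    simp only [Finset.univ_eq_empty, Finset.prod_empty, mul_one, ← gdelta_eq] at this
    have h2 : ∏ a, w4 (if a = w then DA e else A) = w4 (DA e) * w4 A ^ (k - 1) := by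
      simp only [apply_ite w4]
      rw [← prod_update_erase w (fun _ => w4 A)]
      simp [Finset.card_erase_of_mem]
    rw [h2, one_mul] at this
    rw [← this]
    refine Finset.sum_congr rfl fun js _ => Finset.sum_congr rfl fun is _ => ?_
    rw [prod_update_erase w (fun b => A (js (d0 b)) (js (d1 b)) (is (d0 b)) (is (d1 b)))]
    congr 1
    refine Finset.prod_congr rfl fun a _ => ?_
    split_ifs with hh
    · subst hh; rfl
    · rfl
  simp only [Finset.mul_sum]
  rw [Finset.sum_congr rfl fun js _ => Finset.sum_comm, Finset.sum_comm]
  rw [Finset.sum_congr rfl fun w _ => h w]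
  rw [mul_assoc, ← nsmul_eq_mul, map_nsmul]
  simp

lemma xiTerm1_eq {n K : ℕ} (W : Fin n → Fin n → Fin n → Fin n → ℝ)
    (C : Fin n → Fin n → Fin n → ℝ) (i : Fin n) :
    xiTerm1 (K := K) W C i = (1 / (Nat.factorial (K + 1) : ℝ)) *
      ∑ j, LL n (X (j, i) * p2 (C j) * w4 W ^ K) := by
  unfold xiTerm1
  congr 1
  refine Finset.sum_congr rfl fun j _ => ?_
  have := sum_expand (eqXi K) (X (j, i) : Pol n) (fun _ => W) (fun _ => C j)
  simp only [← gdelta_cons_eq, Finset.univ_unique, Finset.prod_singleton, Finset.prod_const,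
    Finset.card_univ, Fintype.card_fin, Finset.card_singleton, pow_one] at this
  rw [mul_assoc, mul_comm (p2 (C j)), ← this]
  refine Finset.sum_congr rfl fun js _ => Finset.sum_congr rfl fun is _ => ?_
  rw [mul_assoc, mul_comm (C _ _ _)]
  rfl

lemma DOmegaT_eq {n k : ℕ} (W : Fin n → Fin n → Fin n → Fin n → ℝ)
    (P : Fin n → Fin n → ℝ)
    (DW : Fin n → Fin n → Fin n → Fin n → Fin n → ℝ)
    (DP : Fin n → Fin n → Fin n → ℝ) (e : Fin n) (i j : Fin n) :
    DOmegaT (k := k) W P DW DP e i j = ∑ ℓ ∈ Finset.range k,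
      (4 : ℝ) ^ (k - ℓ) * (1 / ((Nat.factorial ℓ : ℝ) * ((k : ℝ) - (ℓ : ℝ)))) *
      LL n (X (j, i) * ((ℓ : Pol n) * w4 (DW e) * w4 W ^ (ℓ - 1) * p2 P ^ (k - ℓ)
        + ((k - ℓ : ℕ) : Pol n) * p2 (DP e) * w4 W ^ ℓ * p2 P ^ (k - ℓ - 1))) := by
  unfold DOmegaT
  rw [Finset.sum_range]
  refine Finset.sum_congr rfl fun ℓ _ => ?_
  congr 1
  obtain ⟨ℓ, hℓ⟩ := ℓ
  simp only
  rw [mul_add, map_add]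
  simp only [mul_add, Finset.sum_add_distrib]
  congr 1
  · have h : ∀ w : Fin ℓ, _ := fun w =>
      sum_expand (eqOm k ℓ hℓ) (X (j, i) : Pol n) (fun a => if a = w then DW e else W)
        (fun b => P)
    have h2 : ∀ w : Fin ℓ, ∏ a, w4 (if a = w then DW e else W)
        = w4 (DW e) * w4 W ^ (ℓ - 1) := by
      intro w
      simp only [apply_ite w4]
      rw [← prod_update_erase w (fun _ => w4 W)]
      simp [Finset.card_erase_of_mem]
    simp only [Finset.mul_sum]
    rw [Finset.sum_congr rfl fun js _ => Finset.sum_comm, Finset.sum_comm]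
    have h3 : (LL n) (X (j, i) * ((ℓ : Pol n) * w4 (DW e) * w4 W ^ (ℓ - 1) * p2 P ^ (k - ℓ)))
        = ∑ w : Fin ℓ, LL n (X (j, i) * (w4 (DW e) * w4 W ^ (ℓ - 1) * p2 P ^ (k - ℓ))) := by
      rw [← map_sum]; congr 1; simp; ring
    rw [h3]
    refine Finset.sum_congr rfl fun w _ => ?_
    specialize h w
    rw [h2 w] at h
    simp only [← gdelta_cons_eq, Finset.prod_const, Finset.card_univ, Fintype.card_fin] at h
    rw [← h]
    refine Finset.sum_congr rfl fun js _ => Finset.sum_congr rfl fun is _ => ?_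
    rw [prod_update_erase w]
    congr 2
    refine Finset.prod_congr rfl fun a _ => ?_
    split_ifs with hh
    · subst hh; rfl
    · rfl
  · have h : ∀ p : Fin (k - ℓ), _ := fun p =>
      sum_expand (eqOm k ℓ hℓ) (X (j, i) : Pol n) (fun a => W)
        (fun b => if b = p then DP e else P)
    have h2 : ∀ p : Fin (k - ℓ), ∏ a, p2 (if a = p then DP e else P)
        = p2 (DP e) * p2 P ^ (k - ℓ - 1) := by
      intro w
      simp only [apply_ite p2]
      rw [← prod_update_erase w (fun _ => p2 P)]
      simp [Finset.card_erase_of_mem]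
    simp only [Finset.mul_sum]
    rw [Finset.sum_congr rfl fun js _ => Finset.sum_comm, Finset.sum_comm]
    have h3 : (LL n) (X (j, i) * (((k - ℓ : ℕ) : Pol n) * p2 (DP e) * w4 W ^ ℓ * p2 P ^ (k - ℓ - 1)))
        = ∑ w : Fin (k - ℓ), LL n (X (j, i) * (w4 W ^ ℓ * (p2 (DP e) * p2 P ^ (k - ℓ - 1)))) := by
      rw [← map_sum]; congr 1
      rw [Finset.sum_const, Finset.card_univ, Fintype.card_fin, nsmul_eq_mul]; ring
    rw [h3]
    refine Finset.sum_congr rfl fun w _ => ?_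
    specialize h w
    rw [h2 w] at h
    simp only [← gdelta_cons_eq, Finset.prod_const, Finset.card_univ, Fintype.card_fin] at h
    rw [← h]
    refine Finset.sum_congr rfl fun js _ => Finset.sum_congr rfl fun is _ => ?_
    congr 1
    rw [mul_comm (DP e _ _), mul_assoc, prod_update_erase w]
    congr 1
    refine Finset.prod_congr rfl fun a _ => ?_
    split_ifs with hh
    · subst hh; rfl
    · rfl

lemma LL_p2 {n : ℕ} (Z : Pol n) (B : Fin n → Fin n → ℝ) (y : Pol n) :
    LL n (Z * p2 B * y) = ∑ a, ∑ c, B a c * LL n (Z * X (a, c) * y) := by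
  simp only [p2, Finset.mul_sum, Finset.sum_mul, map_sum, mul_smul_comm, smul_mul_assoc, map_smul,
    smul_eq_mul]

lemma LL_w4 {n : ℕ} (Z : Pol n) (A : Fin n → Fin n → Fin n → Fin n → ℝ) (y : Pol n) :
    LL n (Z * w4 A * y)
      = ∑ a, ∑ b, ∑ c, ∑ d, A a b c d * LL n (Z * (X (a, c) * X (b, d)) * y) := by
  simp only [w4, Finset.mul_sum, Finset.sum_mul, map_sum, mul_smul_comm, smul_mul_assoc, map_smul,
    smul_eq_mul]

lemma div_P {n : ℕ} (DP C : Fin n → Fin n → Fin n → ℝ)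
    (hC : ∀ i j k, C i j k = DP i j k - DP j i k) (i : Fin n) (y : Pol n) :
    ∑ j, LL n (X (j, i) * p2 (DP j) * y) = (1 / 2) * ∑ j, LL n (X (j, i) * p2 (C j) * y) := by
  have h : ∑ j, LL n (X (j, i) * p2 (C j) * y) = 2 * ∑ j, LL n (X (j, i) * p2 (DP j) * y) := by
    simp only [LL_p2, hC, sub_mul, Finset.sum_sub_distrib]
    have h2 : ∑ j, ∑ a, ∑ c, DP a j c * LL n (X (j, i) * X (a, c) * y)
        = - ∑ j, ∑ a, ∑ c, DP j a c * LL n (X (j, i) * X (a, c) * y) := by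
      rw [Finset.sum_comm]
      simp only [← Finset.sum_neg_distrib]
      refine Finset.sum_congr rfl fun j _ => Finset.sum_congr rfl fun a _ =>
        Finset.sum_congr rfl fun c _ => ?_
      rw [LL_swap]; ring
    rw [h2]; ring
  rw [h]; ring

lemma alt3_eq {n : ℕ} (T : Fin n → Fin n → Fin n → ℝ) (i j k : Fin n) :
    alt3 T i j k = (1 / 6) * (T i j k - T j i k - T i k j - T k j i + T j k i + T k i j) := by
  have hu : (Finset.univ : Finset (Equiv.Perm (Fin 3))) =
      {1, Equiv.swap 0 1, Equiv.swap 0 2, Equiv.swap 1 2, Equiv.swap 0 1 * Equiv.swap 1 2,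
        Equiv.swap 1 2 * Equiv.swap 0 1} := by decide
  unfold alt3
  rw [hu]
  rw [Finset.sum_insert (by decide), Finset.sum_insert (by decide), Finset.sum_insert (by decide),
    Finset.sum_insert (by decide), Finset.sum_insert (by decide), Finset.sum_singleton]
  have e1 : (Equiv.swap (0 : Fin 3) 1) 2 = 2 := by decide
  have e2 : (Equiv.swap (0 : Fin 3) 2) 1 = 1 := by decide
  have e3 : (Equiv.swap (1 : Fin 3) 2) 0 = 0 := by decide
  have e4 : (1 : Fin 3) ≠ 2 := by decide
  have e5 : (0 : Fin 3) ≠ 2 := by decide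
  simp [e1, e2, e3, e4, e5, Equiv.Perm.sign_mul]
  ring

lemma alt_sum {n : ℕ} (T D : Fin n → Fin n → Fin n → ℝ)
    (h1 : ∀ a b c, D a b c = - D b a c) (h2 : ∀ a b c, D a b c = - D a c b) :
    ∑ a, ∑ b, ∑ c, alt3 T a b c * D a b c = ∑ a, ∑ b, ∑ c, T a b c * D a b c := by
  have s1 : ∀ T : Fin n → Fin n → Fin n → ℝ, ∑ a, ∑ b, ∑ c, T b a c * D a b c
      = - ∑ a, ∑ b, ∑ c, T a b c * D a b c := by
    intro T
    rw [Finset.sum_comm]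
    simp only [← Finset.sum_neg_distrib]
    refine Finset.sum_congr rfl fun j _ => Finset.sum_congr rfl fun a _ =>
        Finset.sum_congr rfl fun c _ => ?_
    rw [h1]; ring
  have s2 : ∀ T : Fin n → Fin n → Fin n → ℝ, ∑ a, ∑ b, ∑ c, T a c b * D a b c
      = - ∑ a, ∑ b, ∑ c, T a b c * D a b c := by
    intro T
    rw [← Finset.sum_neg_distrib]
    refine Finset.sum_congr rfl fun j _ => ?_
    rw [Finset.sum_comm]
    simp only [← Finset.sum_neg_distrib]
    refine Finset.sum_congr rfl fun a _ =>
        Finset.sum_congr rfl fun c _ => ?_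
    rw [h2]; ring
  have s3 := s2 (fun a b c => T b a c)
  have s4 := s1 (fun a b c => T a c b)
  have s5 := s1 (fun a b c => T c a b)
  rw [s1 T] at s3
  rw [s2 T] at s4
  -- s3 : T c a b ; s4 : T b c a ; s5 : T c b a
  rw [s3] at s5
  simp only [alt3_eq, mul_assoc, add_mul, sub_mul, ← Finset.mul_sum, Finset.sum_add_distrib,
    Finset.sum_sub_distrib]
  rw [s1 T, s2 T, s3, s4, s5]
  ring

lemma w4_kron {n : ℕ} (B : Fin n → Fin n → ℝ) :
    w4 (fun a b c d => B a c * kron b d) = p2 B * gg n := by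
  simp only [w4, p2, gg, Finset.sum_mul]
  refine Finset.sum_congr rfl fun a _ => ?_
  rw [Finset.sum_comm]
  refine Finset.sum_congr rfl fun c _ => ?_
  rw [Finset.mul_sum]
  refine Finset.sum_congr rfl fun b _ => ?_
  rw [Finset.sum_eq_single b]
  · simp [kron]
  · intro d _ hd; simp [kron, hd.symm]
  · simp

lemma w4_swap_lower {n : ℕ} (A : Fin n → Fin n → Fin n → Fin n → ℝ) (Z y : Pol n) :
    LL n (Z * w4 (fun a b c d => A a b d c) * y) = - LL n (Z * w4 A * y) := by
  simp only [LL_w4, ← Finset.sum_neg_distrib]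
  refine Finset.sum_congr rfl fun a _ => Finset.sum_congr rfl fun b _ => ?_
  rw [Finset.sum_comm]
  refine Finset.sum_congr rfl fun c _ => Finset.sum_congr rfl fun d _ => ?_
  rw [show Z * (X (a, d) * X (b, c)) * y = X (a, d) * X (b, c) * (Z * y) by ring, LL_swap,
    show Z * (X (a, c) * X (b, d)) * y = X (b, d) * X (a, c) * (Z * y) by ring]
  ring

lemma w4_swap_both {n : ℕ} (A : Fin n → Fin n → Fin n → Fin n → ℝ) :
    w4 (fun a b c d => A b a d c) = w4 A := by
  simp only [w4]
  rw [Finset.sum_comm]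
  refine Finset.sum_congr rfl fun a _ => Finset.sum_congr rfl fun b _ => ?_
  rw [Finset.sum_comm]
  refine Finset.sum_congr rfl fun c _ => Finset.sum_congr rfl fun d _ => ?_
  rw [mul_comm]

lemma p2_hom {n : ℕ} (B : Fin n → Fin n → ℝ) : (p2 B).IsHomogeneous 1 := by
  refine IsHomogeneous.sum _ _ _ fun a _ => IsHomogeneous.sum _ _ _ fun c _ => ?_
  rw [MvPolynomial.smul_eq_C_mul]
  exact isHomogeneous_C_mul_X _ _

lemma w4_hom {n : ℕ} (A : Fin n → Fin n → Fin n → Fin n → ℝ) : (w4 A).IsHomogeneous 2 := by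
  refine IsHomogeneous.sum _ _ _ fun a _ => IsHomogeneous.sum _ _ _ fun b _ =>
    IsHomogeneous.sum _ _ _ fun c _ => IsHomogeneous.sum _ _ _ fun d _ => ?_
  rw [MvPolynomial.smul_eq_C_mul]
  exact ((isHomogeneous_X _ _).mul (isHomogeneous_X _ _)).C_mul _

lemma div_W {n : ℕ} (DW : Fin n → Fin n → Fin n → Fin n → Fin n → ℝ)
    (C : Fin n → Fin n → Fin n → ℝ)
    (hB : ∀ i j k l m,
      alt3 (fun a b c => DW a b c l m) i j k
        = -2 * alt3 (fun a b c => alt2 (fun x y => C a b x * kron c y) l m) i j k)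
    (i : Fin n) (m : ℕ) (y : Pol n) (hy : y.IsHomogeneous m) :
    ∑ j, LL n (X (j, i) * w4 (DW j) * y)
      = -2 * ((n : ℝ) - (m + 2)) * ∑ j, LL n (X (j, i) * p2 (C j) * y) := by
  have perm : ∀ F : Fin n → Fin n → Fin n → Fin n → Fin n → ℝ,
      ∑ j, ∑ a, ∑ b, ∑ c, ∑ d, F j a b c d = ∑ c, ∑ d, ∑ j, ∑ a, ∑ b, F j a b c d := by
    intro F
    have q1 : ∀ j a, ∑ b, ∑ c, ∑ d, F j a b c d = ∑ c, ∑ d, ∑ b, F j a b c d := by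
      intro j a
      rw [Finset.sum_comm]
      exact Finset.sum_congr rfl fun c _ => Finset.sum_comm
    have q2 : ∀ j, ∑ a, ∑ c, ∑ d, ∑ b, F j a b c d = ∑ c, ∑ d, ∑ a, ∑ b, F j a b c d := by
      intro j
      rw [Finset.sum_comm]
      exact Finset.sum_congr rfl fun c _ => Finset.sum_comm
    simp only [q1, q2]
    rw [Finset.sum_comm]
    exact Finset.sum_congr rfl fun c _ => Finset.sum_comm
  have key : ∑ j, LL n (X (j, i) * w4 (DW j) * y)
      = -2 * ∑ j, LL n (X (j, i) *
          w4 (fun a b c d => alt2 (fun x y => C j a x * kron b y) c d) * y) := by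
    simp only [LL_w4]
    rw [perm (fun j a b c d => DW j a b c d * LL n (X (j, i) * (X (a, c) * X (b, d)) * y)),
      perm (fun j a b c d => alt2 (fun x y => C j a x * kron b y) c d *
        LL n (X (j, i) * (X (a, c) * X (b, d)) * y)), Finset.mul_sum]
    refine Finset.sum_congr rfl fun c _ => ?_
    rw [Finset.mul_sum]
    refine Finset.sum_congr rfl fun d _ => ?_
    have a1 : ∀ j a b, LL n (X (j, i) * (X (a, c) * X (b, d)) * y)
        = - LL n (X (a, i) * (X (j, c) * X (b, d)) * y) := by
      intro j a b
      rw [show X (j, i) * (X (a, c) * X (b, d)) * y = X (j, i) * X (a, c) * (X (b, d) * y) by ring,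
        LL_swap]
      congr 2; ring
    have a2 : ∀ j a b, LL n (X (j, i) * (X (a, c) * X (b, d)) * y)
        = - LL n (X (j, i) * (X (b, c) * X (a, d)) * y) := by
      intro j a b
      rw [show X (j, i) * (X (a, c) * X (b, d)) * y = X (a, c) * X (b, d) * (X (j, i) * y) by ring,
        LL_swap]
      congr 2; ring
    rw [← alt_sum (fun j a b => DW j a b c d) _ a1 a2,
      ← alt_sum (fun j a b => alt2 (fun x y => C j a x * kron b y) c d) _ a1 a2]
    simp only [hB, mul_assoc, Finset.mul_sum]
  have h2 : ∀ j, LL n (X (j, i) *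
          w4 (fun a b c d => alt2 (fun x y => C j a x * kron b y) c d) * y)
      = ((n : ℝ) - (m + 2)) * LL n (X (j, i) * p2 (C j) * y) := by
    intro j
    have h3 : w4 (fun a b c d => alt2 (fun x y => C j a x * kron b y) c d)
        = (1 / 2 : ℝ) • w4 (fun a b c d => C j a c * kron b d)
          - (1 / 2 : ℝ) • w4 (fun a b c d => C j a d * kron b c) := by
      simp only [w4, alt2, Finset.smul_sum, ← Finset.sum_sub_distrib, smul_smul, ← sub_smul,
        mul_sub]
    have h4 := w4_swap_lower (fun a b c d => C j a c * kron b d) (X (j, i)) y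
    have h5 : LL n (X (j, i) * w4 (fun a b c d => C j a c * kron b d) * y)
      = ((n : ℝ) - (m + 2)) * LL n (X (j, i) * p2 (C j) * y) := by
      rw [w4_kron, show X (j, i) * (p2 (C j) * gg n) * y = gg n * (X (j, i) * p2 (C j) * y) by ring,
        LL_contract (m := 1 + 1 + m) _ (((isHomogeneous_X _ _).mul (p2_hom _)).mul hy)]
      push_cast; ring
    rw [h3, mul_sub, sub_mul, map_sub, mul_smul_comm, smul_mul_assoc, map_smul, mul_smul_comm,
      smul_mul_assoc, map_smul, h4, h5]
    simp only [smul_eq_mul]; ring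
  rw [key]
  simp only [h2, ← Finset.mul_sum]
  ring

lemma LL_Rm {n : ℕ} (W : Fin n → Fin n → Fin n → Fin n → ℝ) (P : Fin n → Fin n → ℝ) (y : Pol n) :
    LL n (w4 (fun a b c d => W a b c d + P a c * kron b d - P a d * kron b c
                + P b d * kron a c - P b c * kron a d) * y)
      = LL n ((w4 W + 4 * p2 P * gg n) * y) := by
  let A : Fin n → Fin n → Fin n → Fin n → ℝ := fun a b c d => P a c * kron b d
  have h : w4 (fun a b c d => W a b c d + P a c * kron b d - P a d * kron b c
                + P b d * kron a c - P b c * kron a d)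
      = w4 W + w4 A - w4 (fun a b c d => A a b d c) + w4 (fun a b c d => A b a d c)
        - w4 (fun a b c d => (fun a b c d => A b a d c) a b d c) := by
    simp only [w4, ← Finset.sum_sub_distrib, ← Finset.sum_add_distrib, ← sub_smul, ← add_smul, A]
  have h1 := w4_swap_lower A 1 y
  have h2 := w4_swap_lower (fun a b c d => A b a d c) 1 y
  simp only [one_mul, w4_swap_both A] at h1 h2
  rw [h]
  simp only [add_mul, sub_mul, map_sub, map_add]
  rw [h1, h2, w4_swap_both A, w4_kron]
  have h3 : LL n (4 * p2 P * gg n * y) = 4 * LL n (p2 P * gg n * y) := by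
    rw [show 4 * p2 P * gg n * y = (4 : ℝ) • (p2 P * gg n * y) by
      rw [MvPolynomial.smul_eq_C_mul, map_ofNat MvPolynomial.C 4]; ring]
    simp
  rw [h3]; ring

lemma rel_pow {n : ℕ} (u v : Pol n) (h : ∀ y, LL n (u * y) = LL n (v * y)) (m : ℕ) :
    ∀ y, LL n (u ^ m * y) = LL n (v ^ m * y) := by
  induction m with
  | zero => intro y; simp
  | succ m ih =>
    intro y
    rw [pow_succ, mul_assoc, ih, show v ^ m * (u * y) = u * (v ^ m * y) by ring, h]
    congr 1; ring

lemma leibniz_binom {R : Type} [CommRing R] (u v u' v' : R) (k : ℕ) :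
    (k : R) * (u' + v') * (u + v) ^ (k - 1)
      = ∑ m ∈ Finset.range (k + 1), ((m : R) * u' * u ^ (m - 1) * v ^ (k - m)
        + u ^ m * (((k - m : ℕ) : R) * v' * v ^ (k - m - 1))) * (k.choose m : R) := by
  have h := congrArg (fun f => (Polynomial.derivative f).eval 0)
    (add_pow (Polynomial.C u + Polynomial.C u' * Polynomial.X)
      (Polynomial.C v + Polynomial.C v' * Polynomial.X) k)
  simp only [Polynomial.derivative_pow, Polynomial.derivative_sum, Polynomial.eval_finsetSum,
    Polynomial.derivative_mul, Polynomial.derivative_add, Polynomial.derivative_natCast] at h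
  simp at h
  rw [show (k : R) * (u' + v') * (u + v) ^ (k - 1) = k * (u + v) ^ (k - 1) * (u' + v') by ring, h]
  refine Finset.sum_congr rfl fun m _ => ?_
  ring

lemma div_part {n k : ℕ} (hn : n = 2 * k) (hk : 0 < k)
    (W : Fin n → Fin n → Fin n → Fin n → ℝ)
    (P : Fin n → Fin n → ℝ)
    (DP : Fin n → Fin n → Fin n → ℝ)
    (DW : Fin n → Fin n → Fin n → Fin n → Fin n → ℝ)
    (C : Fin n → Fin n → Fin n → ℝ)
    (hC : ∀ i j k, C i j k = DP i j k - DP j i k)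
    (hB : ∀ i j k l m,
      alt3 (fun a b c => DW a b c l m) i j k
        = -2 * alt3 (fun a b c => alt2 (fun x y => C a b x * kron c y) l m) i j k) (i : Fin n) :
    ∑ j, DOmegaT (k := k) W P DW DP j i j
      = 2 * (k : ℝ) * ((1 / (Nat.factorial k : ℝ)) *
          ∑ j, LL n (X (j, i) * p2 (C j) * w4 W ^ (k - 1))) := by
  simp only [DOmegaT_eq]
  rw [Finset.sum_comm]
  let G : ℕ → ℝ := fun ℓ => ∑ j, LL n (X (j, i) * p2 (C j) * (w4 W ^ ℓ * p2 P ^ (k - 1 - ℓ)))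
  let f : ℕ → ℝ := fun ℓ => 2 * 4 ^ (k - ℓ) * ((ℓ : ℝ) / (Nat.factorial ℓ : ℝ)) * G (ℓ - 1)
  have hterm : ∀ ℓ ∈ Finset.range k,
      ∑ j, (4 : ℝ) ^ (k - ℓ) * (1 / ((Nat.factorial ℓ : ℝ) * ((k : ℝ) - (ℓ : ℝ)))) *
      LL n (X (j, i) * ((ℓ : Pol n) * w4 (DW j) * w4 W ^ (ℓ - 1) * p2 P ^ (k - ℓ)
        + ((k - ℓ : ℕ) : Pol n) * p2 (DP j) * w4 W ^ ℓ * p2 P ^ (k - ℓ - 1)))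
      = f (ℓ + 1) - f ℓ := by
    intro ℓ hℓ
    rw [Finset.mem_range] at hℓ
    have e : ∀ j, LL n (X (j, i) * ((ℓ : Pol n) * w4 (DW j) * w4 W ^ (ℓ - 1) * p2 P ^ (k - ℓ)
        + ((k - ℓ : ℕ) : Pol n) * p2 (DP j) * w4 W ^ ℓ * p2 P ^ (k - ℓ - 1)))
        = (ℓ : ℝ) * LL n (X (j, i) * w4 (DW j) * (w4 W ^ (ℓ - 1) * p2 P ^ (k - ℓ)))
          + ((k - ℓ : ℕ) : ℝ) * LL n (X (j, i) * p2 (DP j) * (w4 W ^ ℓ * p2 P ^ (k - ℓ - 1))) := by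
      intro j
      rw [← nsmul_eq_mul ℓ (LL n _), ← nsmul_eq_mul (k - ℓ) (LL n _), ← map_nsmul, ← map_nsmul,
        ← map_add]
      congr 1
      simp only [nsmul_eq_mul]
      ring
    simp only [e]
    rw [← Finset.mul_sum, Finset.sum_add_distrib, ← Finset.mul_sum, ← Finset.mul_sum,
      div_P DP C hC, div_W DW C hB i _ _ (((w4_hom W).pow (ℓ - 1)).mul ((p2_hom P).pow (k - ℓ)))]
    have g1 : ∑ j, LL n (X (j, i) * p2 (C j) * (w4 W ^ ℓ * p2 P ^ (k - ℓ - 1))) = G ℓ := by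
      simp only [G]
      rw [show k - ℓ - 1 = k - 1 - ℓ by omega]
    rw [g1]
    have hkl : ((k - ℓ : ℕ) : ℝ) = (k : ℝ) - ℓ := by rw [Nat.cast_sub hℓ.le]
    have hne : (k : ℝ) - ℓ ≠ 0 := by
      rw [← hkl]; exact_mod_cast (by omega : k - ℓ ≠ 0)
    have h4 : (4 : ℝ) ^ (k - ℓ) = 4 * 4 ^ (k - (ℓ + 1)) := by
      rw [show k - ℓ = (k - (ℓ + 1)) + 1 by omega, pow_succ]; ring
    simp only [f]
    rw [hkl, Nat.factorial_succ, Nat.add_sub_cancel]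
    have hf : (Nat.factorial ℓ : ℝ) ≠ 0 := by exact_mod_cast Nat.factorial_ne_zero ℓ
    have hl1 : (ℓ : ℝ) + 1 ≠ 0 := by positivity
    rcases ℓ with _ | ℓ
    · simp only [Nat.cast_zero, zero_mul, zero_add, zero_div, mul_zero, sub_zero] at *
      rw [h4]
      push_cast
      field_simp
      norm_num
    · have g2 : ∑ j, LL n (X (j, i) * p2 (C j) * (w4 W ^ (ℓ + 1 - 1) * p2 P ^ (k - (ℓ + 1)))) = G ℓ := by
        simp only [G]
        rw [show k - (ℓ + 1) = k - 1 - ℓ by omega, Nat.add_sub_cancel]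
      rw [g2, Nat.add_sub_cancel]
      have hdim : (n : ℝ) - (((2 * ℓ + 1 * (k - (ℓ + 1)) : ℕ) : ℝ) + 2)
          = (k : ℝ) - ((ℓ + 1 : ℕ) : ℝ) := by
        rw [hn]; push_cast [Nat.cast_sub hℓ.le]; ring
      rw [hdim, h4]
      push_cast at hne hf hl1 ⊢
      field_simp
      ring
  rw [Finset.sum_congr rfl hterm, Finset.sum_range_sub]
  simp only [f, G]
  simp
  ring

lemma tr_part {n k : ℕ} (hn : n = 2 * k)
    (W : Fin n → Fin n → Fin n → Fin n → ℝ)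
    (P : Fin n → Fin n → ℝ)
    (DP : Fin n → Fin n → Fin n → ℝ)
    (DW : Fin n → Fin n → Fin n → Fin n → Fin n → ℝ) (i : Fin n) :
    DPfA (k := k) (fun a b c d => W a b c d + P a c * kron b d - P a d * kron b c
                + P b d * kron a c - P b c * kron a d)
              (fun e a b c d => DW e a b c d + DP e a c * kron b d - DP e a d * kron b c
                + DP e b d * kron a c - DP e b c * kron a d) i
      = DPfA (k := k) W DW i + ∑ j, DOmegaT (k := k) W P DW DP i j j := by
  let S : ℕ → Pol n := fun ℓ => (ℓ : Pol n) * w4 (DW i) * w4 W ^ (ℓ - 1) * p2 P ^ (k - ℓ)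
        + ((k - ℓ : ℕ) : Pol n) * p2 (DP i) * w4 W ^ ℓ * p2 P ^ (k - ℓ - 1)
  have hS : ∀ ℓ ≤ k, (S ℓ).IsHomogeneous (k + ℓ) := by
    intro ℓ hℓ
    have hc : ∀ m : ℕ, ((m : Pol n)).IsHomogeneous 0 := by
      intro m
      rw [show (m : Pol n) = C (m : ℝ) by simp]
      exact isHomogeneous_C _ _
    refine IsHomogeneous.add ?_ ?_
    · rcases ℓ with _ | ℓ
      · simp [isHomogeneous_zero]
      · have := (((hc (ℓ + 1)).mul (w4_hom (DW i))).mul ((w4_hom W).pow (ℓ + 1 - 1))).mul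
          ((p2_hom P).pow (k - (ℓ + 1)))
        rwa [show 0 + 2 + 2 * (ℓ + 1 - 1) + 1 * (k - (ℓ + 1)) = k + (ℓ + 1) by omega] at this
    · rcases Nat.lt_or_ge ℓ k with h | h
      · have := (((hc (k - ℓ)).mul (p2_hom (DP i))).mul ((w4_hom W).pow ℓ)).mul
          ((p2_hom P).pow (k - ℓ - 1))
        rwa [show 0 + 1 + 2 * ℓ + 1 * (k - ℓ - 1) = k + ℓ by omega] at this
      · rw [show k - ℓ = 0 by omega]
        simp [isHomogeneous_zero]
  have tr : ∑ j, DOmegaT (k := k) W P DW DP i j j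
      = ∑ ℓ ∈ Finset.range k, (4 : ℝ) ^ (k - ℓ) / (Nat.factorial ℓ : ℝ) * LL n (S ℓ) := by
    simp only [DOmegaT_eq]
    rw [Finset.sum_comm]
    refine Finset.sum_congr rfl fun ℓ hℓ => ?_
    rw [Finset.mem_range] at hℓ
    rw [← Finset.mul_sum]
    have h1 : ∑ j, LL n (X (j, j) * S ℓ) = ((k : ℝ) - ℓ) * LL n (S ℓ) := by
      rw [← map_sum, ← Finset.sum_mul]
      have := LL_contract _ (hS ℓ hℓ.le)
      rw [gg] at this
      rw [this, show (n : ℝ) - ((k + ℓ : ℕ) : ℝ) = (k : ℝ) - ℓ by rw [hn]; push_cast; ring]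
    simp only [S] at h1 ⊢
    rw [h1]
    have hne : (k : ℝ) - ℓ ≠ 0 := by
      rw [← Nat.cast_sub hℓ.le]; exact_mod_cast (by omega : k - ℓ ≠ 0)
    have hf : (Nat.factorial ℓ : ℝ) ≠ 0 := by exact_mod_cast Nat.factorial_ne_zero ℓ
    field_simp
  have lhs : LL n ((k : Pol n) * w4 (fun a b c d => DW i a b c d + DP i a c * kron b d - DP i a d * kron b c
                + DP i b d * kron a c - DP i b c * kron a d) *
      w4 (fun a b c d => W a b c d + P a c * kron b d - P a d * kron b c
                + P b d * kron a c - P b c * kron a d) ^ (k - 1))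
      = LL n ((k : Pol n) * (w4 (DW i) + 4 * p2 (DP i) * gg n) *
          (w4 W + 4 * p2 P * gg n) ^ (k - 1)) := by
    rw [mul_comm, rel_pow _ _ (LL_Rm W P),
      ← mul_assoc, mul_comm, LL_Rm (DW i) (DP i)]
    congr 1; ring
  rw [DPfA_eq, DPfA_eq, tr]
  rw [lhs, leibniz_binom, Finset.sum_range_succ, map_add, mul_add, add_comm]
  congr 1
  · simp
  · rw [map_sum, Finset.mul_sum]
    refine Finset.sum_congr rfl fun ℓ hℓ => ?_
    rw [Finset.mem_range] at hℓ
    have h1 : ((ℓ : Pol n) * w4 (DW i) * w4 W ^ (ℓ - 1) * (4 * p2 P * gg n) ^ (k - ℓ)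
        + w4 W ^ ℓ * (((k - ℓ : ℕ) : Pol n) * (4 * p2 (DP i) * gg n) *
          (4 * p2 P * gg n) ^ (k - ℓ - 1))) * (k.choose ℓ : Pol n)
        = ((k.choose ℓ : ℝ) * 4 ^ (k - ℓ)) • (gg n ^ (k - ℓ) * S ℓ) := by
      obtain ⟨s, hs⟩ : ∃ s, k - ℓ = s + 1 := ⟨k - ℓ - 1, by omega⟩
      rw [MvPolynomial.smul_eq_C_mul]
      simp only [S, hs, map_mul, map_pow, map_natCast, map_ofNat MvPolynomial.C 4,
        Nat.add_sub_cancel]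
      ring
    rw [h1, map_smul, LL_contract_pow (k - ℓ) (k + ℓ) _ (hS ℓ hℓ.le) (by omega), smul_eq_mul]
    have hch : (k.choose ℓ : ℝ) * (Nat.factorial ℓ : ℝ) * (Nat.factorial (k - ℓ) : ℝ)
        = (Nat.factorial k : ℝ) := by exact_mod_cast Nat.choose_mul_factorial_mul_factorial hℓ.le
    have hf : (Nat.factorial ℓ : ℝ) ≠ 0 := by exact_mod_cast Nat.factorial_ne_zero ℓ
    have hf' : (Nat.factorial k : ℝ) ≠ 0 := by exact_mod_cast Nat.factorial_ne_zero k
    field_simp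
    rw [← hch]; ring

end Helpers

/-- in dimension `n = 2k` (`k = K+1`), pointwise in an orthonormal
frame: `∇^j Ω^{(k)}_{ij} = (2k/k!) δ^{j j₂…j_{2k}}_{i i₂…i_{2k}} C_{jj₂}{}^{i₂}
W_{j₃j₄}{}^{i₃i₄} ⋯ W_{j_{2k−1}j_{2k}}{}^{i_{2k−1}i_{2k}}` and consequently
`2k ξ^{(k)}_i = ∇^j(tf Ω^{(k)})_{ij} + (1/(2k)) ∇_i Pf^{(k)}(Rm)`. -/
theorem divergence_Omega (K : ℕ)
    (W : Fin (2 * (K + 1)) → Fin (2 * (K + 1)) → Fin (2 * (K + 1)) → Fin (2 * (K + 1)) → ℝ)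
    (hW1 : ∀ a b c d, W a b c d = - W b a c d)
    (hW2 : ∀ a b c d, W a b c d = - W a b d c)
    (hW3 : ∀ a b c d, W a b c d = W c d a b)
    (hWB : ∀ a b c d, W a b c d + W b c a d + W c a b d = 0)
    (hWtf : ∀ a c, ∑ s, W a s c s = 0)
    (P : Fin (2 * (K + 1)) → Fin (2 * (K + 1)) → ℝ) (hP : ∀ i j, P i j = P j i)
    (DP : Fin (2 * (K + 1)) → Fin (2 * (K + 1)) → Fin (2 * (K + 1)) → ℝ)
    (hDP : ∀ e i j, DP e i j = DP e j i)
    (DW : Fin (2 * (K + 1)) → Fin (2 * (K + 1)) → Fin (2 * (K + 1)) → Fin (2 * (K + 1)) → Fin (2 * (K + 1)) → ℝ)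
    (hDW1 : ∀ e a b c d, DW e a b c d = - DW e b a c d)
    (hDW2 : ∀ e a b c d, DW e a b c d = - DW e a b d c)
    (hDW3 : ∀ e a b c d, DW e a b c d = DW e c d a b)
    (hDWtf : ∀ e a c, ∑ s, DW e a s c s = 0)
    (C : Fin (2 * (K + 1)) → Fin (2 * (K + 1)) → Fin (2 * (K + 1)) → ℝ)
    (hC : ∀ i j k, C i j k = DP i j k - DP j i k)
    (hWBianchi : ∀ i j k l m,
      alt3 (fun a b c => DW a b c l m) i j k
        = -2 * alt3 (fun a b c => alt2 (fun x y => C a b x * kron c y) l m) i j k) :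
    (∀ i, ∑ j, DOmegaT (k := K + 1) W P DW DP j i j
        = 2 * ((K : ℝ) + 1) * xiTerm1 (K := K) W C i)
    ∧ (∀ i, 2 * ((K : ℝ) + 1) *
          (xiTerm1 (K := K) W C i + (1 / (4 * ((K : ℝ) + 1) ^ 2)) * DPfA (k := K + 1) W DW i)
        = ((∑ j, DOmegaT (k := K + 1) W P DW DP j i j)
            - (1 / (2 * ((K : ℝ) + 1))) * (∑ j, DOmegaT (k := K + 1) W P DW DP i j j))
          + (1 / (2 * ((K : ℝ) + 1))) *
            DPfA (k := K + 1)
              (fun a b c d => W a b c d + P a c * kron b d - P a d * kron b c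
                + P b d * kron a c - P b c * kron a d)
              (fun e a b c d => DW e a b c d + DP e a c * kron b d - DP e a d * kron b c
                + DP e b d * kron a c - DP e b c * kron a d) i) := by
  have h1 : ∀ i, ∑ j, DOmegaT (k := K + 1) W P DW DP j i j
        = 2 * ((K : ℝ) + 1) * xiTerm1 (K := K) W C i := by
    intro i
    rw [div_part rfl (Nat.succ_pos K) W P DP DW C hC hWBianchi i, xiTerm1_eq]
    push_cast
    rfl
  refine ⟨h1, fun i => ?_⟩
  rw [tr_part rfl W P DP DW i, h1]
  have hK : (K : ℝ) + 1 ≠ 0 := by positivity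
  field_simp
  ring
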